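/- arXiv:0809.0602 — 2 statements merged into one kernel-verified Lean document; each statement's English description precedes it below -/
import Mathlib

section
/- Let d : ℤ → ℂ be defined by d₀ = π and d_k = i/k for k ≠ 0. Then for every θ ∈ (0, 2π), the symmetric partial sums Σ_{k=−N}^{N} d_k e^{ikθ} converge to θ as N → ∞. -/
/-!
Grouping the terms of index `k` and `-k`, the symmetric partial sums become
`π - 2 ∑ sin (nθ) / n`, and `sin (nθ) / n` is the imaginary part of `zⁿ / n` at `z = exp (iθ)`.
On the unit circle minus `1` the logarithm series converges by Dirichlet's test, so Abel's limit
theorem identifies its sum as `-log (1 - z)`. The imaginary part of that sum is `(π - θ) / 2`,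
since `1 - exp (iθ) = 2 sin (θ / 2) exp (i (θ - π) / 2)`.
-/

open Complex Filter Finset Topology

section PowerSeries

variable {K : Type*} [NormedDivisionRing K] {z : K}

theorem norm_geom_sum_le_of_norm_le_one (hz : ‖z‖ ≤ 1) (hz1 : z ≠ 1) (n : ℕ) :
    ‖∑ i ∈ range n, z ^ i‖ ≤ 2 / ‖z - 1‖ := by
  rw [geom_sum_eq hz1, norm_div]
  gcongr
  calc ‖z ^ n - 1‖ ≤ ‖z ^ n‖ + ‖(1 : K)‖ := norm_sub_le _ _
    _ ≤ 1 + 1 := by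
      rw [norm_pow, norm_one]
      gcongr
      exact pow_le_one₀ (norm_nonneg z) hz
    _ = 2 := one_add_one_eq_two

theorem cauchySeq_sum_smul_pow_of_antitone [NormedSpace ℝ K] {f : ℕ → ℝ} (hf : Antitone f)
    (hf0 : Tendsto f atTop (𝓝 0)) (hz : ‖z‖ ≤ 1) (hz1 : z ≠ 1) :
    CauchySeq fun n ↦ ∑ i ∈ range n, f i • z ^ i :=
  hf.cauchySeq_series_mul_of_tendsto_zero_of_bounded hf0
    (norm_geom_sum_le_of_norm_le_one hz hz1)

end PowerSeries

section LogSeries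

variable {z : ℂ}

theorem one_sub_mem_slitPlane (hz : ‖z‖ ≤ 1) (hz1 : z ≠ 1) : 1 - z ∈ slitPlane := by
  rw [mem_slitPlane_iff, or_iff_not_imp_right, not_not, sub_im, one_im, zero_sub, neg_eq_zero]
  intro him
  have hre : z.re ≠ 1 := fun h ↦ hz1 (Complex.ext h him)
  rw [sub_re, one_re, sub_pos]
  exact lt_of_le_of_ne ((re_le_norm z).trans hz) hre

theorem exists_tendsto_sum_pow_div (hz : ‖z‖ ≤ 1) (hz1 : z ≠ 1) :
    ∃ l, Tendsto (fun n : ℕ ↦ ∑ i ∈ range n, z ^ i / (i : ℂ)) atTop (𝓝 l) := by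
  have hanti : Antitone fun i : ℕ ↦ 1 / ((i : ℝ) + 1) := fun _ _ h ↦
    Nat.one_div_le_one_div h
  obtain ⟨l, hl⟩ := cauchySeq_tendsto_of_complete
    (cauchySeq_sum_smul_pow_of_antitone hanti tendsto_one_div_add_atTop_nhds_zero_nat hz hz1)
  refine ⟨z * l, (tendsto_add_atTop_iff_nat 1).mp ((hl.const_mul z).congr fun n ↦ ?_)⟩
  rw [sum_range_succ', Nat.cast_zero, div_zero, add_zero, mul_sum]
  refine sum_congr rfl fun i _ ↦ ?_
  rw [real_smul]
  push_cast
  ring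

theorem tendsto_sum_pow_div_neg_log (hz : ‖z‖ ≤ 1) (hz1 : z ≠ 1) :
    Tendsto (fun n : ℕ ↦ ∑ i ∈ range n, z ^ i / (i : ℂ)) atTop (𝓝 (-log (1 - z))) := by
  obtain ⟨l, hl⟩ := exists_tendsto_sum_pow_div hz hz1
  have habel : Tendsto (fun x : ℝ ↦ ∑' n : ℕ, z ^ n / (n : ℂ) * (x : ℂ) ^ n) (𝓝[<] 1) (𝓝 l) :=
    tendsto_map'_iff.mp (tendsto_tsum_powerSeries_nhdsWithin_lt hl)
  have hseries : ∀ᶠ x : ℝ in 𝓝[<] 1,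
      ∑' n : ℕ, z ^ n / (n : ℂ) * (x : ℂ) ^ n = -log (1 - z * x) := by
    filter_upwards [Ioo_mem_nhdsLT one_pos] with x hx
    have hnorm : ‖z * x‖ < 1 := by
      rw [norm_mul, Complex.norm_of_nonneg hx.1.le]
      exact (mul_le_of_le_one_left hx.1.le hz).trans_lt hx.2
    rw [← (hasSum_taylorSeries_neg_log hnorm).tsum_eq]
    exact tsum_congr fun n ↦ by rw [mul_pow, div_mul_eq_mul_div]
  have hlog : Tendsto (fun x : ℝ ↦ -log (1 - z * x)) (𝓝[<] 1) (𝓝 (-log (1 - z))) := by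
    have hcont : ContinuousAt (fun x : ℝ ↦ -log (1 - z * x)) 1 :=
      (ContinuousAt.clog (by fun_prop) (by simpa using one_sub_mem_slitPlane hz hz1)).neg
    simpa using hcont.tendsto.mono_left nhdsWithin_le_nhds
  rwa [← tendsto_nhds_unique (habel.congr' hseries) hlog]

end LogSeries

section Sine

theorem one_sub_exp_mul_I (z : ℂ) :
    1 - exp (z * I) = 2 * sin (z / 2) * exp ((z - Real.pi) / 2 * I) := by
  have hshift : exp ((z - Real.pi) / 2 * I) = exp (z / 2 * I) * -I := by
    rw [← exp_neg_pi_div_two_mul_I, ← exp_add]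
    ring_nf
  have hsq : exp (z * I) = exp (z / 2 * I) * exp (z / 2 * I) := by
    rw [← exp_add]
    ring_nf
  have hinv : exp (-(z / 2) * I) * exp (z / 2 * I) = 1 := by
    rw [← exp_add, neg_mul, neg_add_cancel, exp_zero]
  rw [hshift, hsq, sin]
  linear_combination -hinv + (exp (-(z / 2) * I) - exp (z / 2 * I)) * exp (z / 2 * I) * I_sq

variable {θ : ℝ}

theorem sin_half_pos (hθ : θ ∈ Set.Ioo 0 (2 * Real.pi)) : 0 < Real.sin (θ / 2) :=
  Real.sin_pos_of_pos_of_lt_pi (by linarith [hθ.1]) (by linarith [hθ.2])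

theorem exp_mul_I_ne_one (hθ : θ ∈ Set.Ioo 0 (2 * Real.pi)) : exp (θ * I) ≠ 1 := by
  rw [ne_comm, ← sub_ne_zero, one_sub_exp_mul_I]
  have hsin : sin ((θ : ℂ) / 2) ≠ 0 := mod_cast (sin_half_pos hθ).ne'
  exact mul_ne_zero (mul_ne_zero two_ne_zero hsin) (exp_ne_zero _)

theorem arg_one_sub_exp_mul_I (hθ : θ ∈ Set.Ioo 0 (2 * Real.pi)) :
    arg (1 - exp (θ * I)) = (θ - Real.pi) / 2 := by
  have hpolar : 1 - exp (θ * I) = ((2 * Real.sin (θ / 2) : ℝ) : ℂ) *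
      (cos ((θ - Real.pi) / 2 : ℝ) + sin ((θ - Real.pi) / 2 : ℝ) * I) := by
    rw [one_sub_exp_mul_I, ← exp_mul_I]
    push_cast
    rfl
  rw [hpolar]
  exact arg_mul_cos_add_sin_mul_I (mul_pos two_pos (sin_half_pos hθ))
    ⟨by linarith [hθ.1, Real.pi_pos], by linarith [hθ.2, Real.pi_pos]⟩

theorem exp_mul_I_pow_div_im (θ : ℝ) (n : ℕ) :
    (exp (θ * I) ^ n / (n : ℂ)).im = Real.sin (n * θ) / n := by
  rw [div_natCast_im, ← exp_nat_mul, ← mul_assoc, ← ofReal_natCast, ← ofReal_mul,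
    exp_ofReal_mul_I_im]

theorem tendsto_sum_sin_mul_div (hθ : θ ∈ Set.Ioo 0 (2 * Real.pi)) :
    Tendsto (fun n : ℕ ↦ ∑ i ∈ range n, Real.sin (i * θ) / i) atTop
      (𝓝 ((Real.pi - θ) / 2)) := by
  have him := (continuous_im.tendsto _).comp
    (tendsto_sum_pow_div_neg_log (norm_exp_ofReal_mul_I θ).le (exp_mul_I_ne_one hθ))
  rw [neg_im, log_im, arg_one_sub_exp_mul_I hθ, ← neg_div, neg_sub] at him
  refine him.congr fun n ↦ ?_
  simp only [Function.comp_apply, im_sum, exp_mul_I_pow_div_im]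

end Sine

section SymmetricSum

theorem sum_Icc_neg_natCast {M : Type*} [AddCommGroup M] (f : ℤ → M) (N : ℕ) :
    ∑ k ∈ Icc (-(N : ℤ)) N, f k =
      f 0 + ∑ i ∈ range N, (f (i + 1 : ℕ) + f (-(i + 1 : ℕ))) := by
  induction N with
  | zero => simp
  | succ N ih =>
    rw [sum_range_succ, ← add_assoc, ← ih, add_comm (∑ k ∈ _, f k)]
    push_cast
    exact sum_Icc_succ_eq_add_endpoints f

theorem I_div_mul_exp_add_neg (a z : ℂ) :
    I / a * exp (a * z * I) + I / -a * exp (-a * z * I) = -2 * (sin (a * z) / a) := by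
  rw [sin, neg_mul a z]
  ring

end SymmetricSum

/-- The symmetric partial sums of the Fourier series of the sawtooth function, with
coefficients `d₀ = π` and `d_k = i/k` for `k ≠ 0`, converge to `θ` for `θ ∈ (0, 2π)`. -/
theorem sawtooth_fourier_series_converges (d : ℤ → ℂ)
    (hd0 : d 0 = (Real.pi : ℂ))
    (hdk : ∀ k : ℤ, k ≠ 0 → d k = Complex.I / (k : ℂ)) :
    ∀ θ : ℝ, θ ∈ Set.Ioo 0 (2 * Real.pi) →
      Filter.Tendsto
        (fun N : ℕ => ∑ k ∈ Finset.Icc (-(N : ℤ)) (N : ℤ),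
          d k * Complex.exp ((k : ℂ) * (θ : ℂ) * Complex.I))
        Filter.atTop (nhds ((θ : ℝ) : ℂ)) := by
  intro θ hθ
  have hpair (n : ℕ) (hn : n ≠ 0) :
      d n * exp ((n : ℤ) * θ * I) + d (-n) * exp ((-n : ℤ) * θ * I) =
        ((-2 * (Real.sin (n * θ) / n) : ℝ) : ℂ) := by
    rw [hdk n (by omega), hdk (-n) (by omega)]
    push_cast
    exact I_div_mul_exp_add_neg n θ
  have hpartial (N : ℕ) :
      ((Real.pi + -2 * ∑ i ∈ range (N + 1), Real.sin (i * θ) / i : ℝ) : ℂ) =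
        ∑ k ∈ Icc (-(N : ℤ)) N, d k * exp (k * θ * I) := by
    rw [sum_Icc_neg_natCast, hd0, sum_congr rfl fun i _ ↦ hpair (i + 1) i.succ_ne_zero,
      sum_range_succ', mul_add, mul_sum]
    simp
  have hsin := (tendsto_add_atTop_iff_nat 1).mpr (tendsto_sum_sin_mul_div hθ)
  have hlim := (continuous_ofReal.tendsto _).comp ((hsin.const_mul (-2)).const_add Real.pi)
  rw [show Real.pi + -2 * ((Real.pi - θ) / 2) = θ by ring] at hlim
  exact hlim.congr hpartial
end

section
/- Let γ ∈ (0, π) and let χ̃_γ(x) = χ_γ(x)/∫_{−γ}^{γ} χ_γ(y) dy be the normalized bump, where χ_γ(x) = (1 − (x/γ)²)³·1_{[−γ,γ]}(x). Let c_k denote the k-th Fourier coefficient of the 2π-periodic convolution f ⋆ χ̃_γ, where f is the 2π-periodic sawtooth with f(θ) = θ on [0, 2π). Then the series Σ_{k∈ℤ} c_k e^{ikθ} converges absolutely for every θ, and Σ_{k∈ℤ} c_k e^{ikθ} = θ for all θ ∈ (γ, 2π − γ). -/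
/-- The compactly supported bump `χ_γ(x) = (1 - (x/γ)²)³` on `[-γ, γ]`, extended by zero. -/
noncomputable def bumpChi (γ x : ℝ) : ℝ :=
  if |x| ≤ γ then (1 - (x / γ) ^ 2) ^ 3 else 0

/-!
Since the kernel is supported in less than a period, the convolution over the line is a convolution
over the circle `ℝ / 2πℤ`, so its Fourier coefficients are, up to the factor `2π`, products of those
of the kernel and of the sawtooth. Both sequences are in `ℓ²` by Parseval, hence the products are
absolutely summable, and the series converges to the convolution because the latter is continuous.
On `(γ, 2π - γ)` the convolution only sees the linear part of the sawtooth, which it reproduces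
because the kernel has unit mass and vanishing first moment.
-/

open MeasureTheory Set ContinuousLinearMap AddCircle
open scoped Convolution

section Circle

variable {T : ℝ} {E : Type*} [NormedAddCommGroup E] [NormedSpace ℂ E]

theorem fourier_smul_convolution (μ : Measure (AddCircle T)) (W : AddCircle T → ℂ)
    (F : AddCircle T → E) (n : ℤ) (x : AddCircle T) :
    fourier n x • (W ⋆[lsmul ℂ ℂ, μ] F) x =
      ((fun t ↦ fourier n t • W t) ⋆[lsmul ℂ ℂ, μ] fun t ↦ fourier n t • F t) x := by
  have hmul (t : AddCircle T) : fourier n x = fourier n t * fourier n (x - t) := by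
    simp only [fourier_apply, ← Circle.coe_mul, ← toCircle_add, ← smul_add, add_sub_cancel]
  simp only [convolution_def, lsmul_apply, ← integral_smul]
  congr 1 with t
  rw [hmul t, smul_smul, smul_smul, smul_eq_mul]
  ring_nf

theorem integrable_fourier_smul {μ : Measure (AddCircle T)} {F : AddCircle T → E}
    (hF : Integrable F μ) (n : ℤ) : Integrable (fun t ↦ fourier n t • F t) μ :=
  hF.bdd_smul 1 (map_continuous _).aestronglyMeasurable
    (.of_forall fun t ↦ by rw [fourier_apply, Circle.norm_coe])

variable [hT : Fact (0 < T)]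

theorem integral_fourier_neg_smul (F : AddCircle T → E) (n : ℤ) :
    ∫ t, fourier (-n) t • F t = T • fourierCoeff F n := by
  rw [fourierCoeff, integral_haarAddCircle, smul_inv_smul₀ hT.out.ne']

theorem fourierCoeff_convolution [CompleteSpace E] {W : AddCircle T → ℂ} {F : AddCircle T → E}
    (hW : Integrable W) (hF : Integrable F haarAddCircle) (n : ℤ) :
    fourierCoeff (W ⋆[lsmul ℂ ℂ, volume] F) n = (T * fourierCoeff W n) • fourierCoeff F n := by
  calc fourierCoeff (W ⋆[lsmul ℂ ℂ, volume] F) n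
    _ = ∫ x, ((fun t ↦ fourier (-n) t • W t) ⋆[lsmul ℂ ℂ, volume]
          fun t ↦ fourier (-n) t • F t) x ∂haarAddCircle := by
      simp only [fourierCoeff, fourier_smul_convolution]
    _ = (∫ t, fourier (-n) t • W t) • fourierCoeff F n :=
      integral_convolution _ (integrable_fourier_smul hW _) (integrable_fourier_smul hF _)
    _ = (T * fourierCoeff W n) • fourierCoeff F n := by
      rw [integral_fourier_neg_smul, Complex.real_smul]

theorem summable_sq_norm_fourierCoeff {F : AddCircle T → ℂ} (hF : MemLp F 2) :
    Summable fun n ↦ ‖fourierCoeff F n‖ ^ 2 := by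
  have hF := hF.haarAddCircle
  simpa only [fourierCoeff_congr_ae hF.coeFn_toLp] using (hasSum_sq_fourierCoeff hF.toLp).summable

theorem summable_norm_fourierCoeff_convolution {W F : AddCircle T → ℂ}
    (hW : MemLp W 2) (hF : MemLp F 2) :
    Summable fun n ↦ ‖fourierCoeff (W ⋆[lsmul ℂ ℂ, volume] F) n‖ := by
  have hprod : Summable fun n ↦ ‖fourierCoeff W n‖ * ‖fourierCoeff F n‖ :=
    Real.summable_mul_of_Lp_Lq_of_nonneg .two_two (fun _ ↦ norm_nonneg _) (fun _ ↦ norm_nonneg _)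
      (mod_cast summable_sq_norm_fourierCoeff hW) (mod_cast summable_sq_norm_fourierCoeff hF)
  refine (hprod.mul_left T).congr fun n ↦ ?_
  rw [fourierCoeff_convolution (hW.integrable one_le_two)
    (hF.haarAddCircle.integrable one_le_two), norm_smul, norm_mul, Complex.norm_real,
    Real.norm_of_nonneg hT.out.le, mul_assoc]

theorem hasSum_fourier_convolution {W F : AddCircle T → ℂ} (hW : Continuous W) (hF : MemLp F 2)
    (x : AddCircle T) :
    HasSum (fun n ↦ fourierCoeff (W ⋆[lsmul ℂ ℂ, volume] F) n • fourier n x)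
      ((W ⋆[lsmul ℂ ℂ, volume] F) x) := by
  have hW_supp : HasCompactSupport W := .of_compactSpace W
  have hcont : Continuous (W ⋆[lsmul ℂ ℂ, volume] F) :=
    hW_supp.continuous_convolution_left _ hW (hF.integrable one_le_two).locallyIntegrable
  have hsum := summable_norm_fourierCoeff_convolution (hW.memLp_of_hasCompactSupport hW_supp) hF
  exact has_pointwise_sum_fourier_series_of_summable (f := ⟨_, hcont⟩) hsum.of_norm x

theorem convolution_liftIoc_coe {𝕜 E E' G : Type*} [NontriviallyNormedField 𝕜]
    [NormedAddCommGroup E] [NormedSpace 𝕜 E] [NormedAddCommGroup E'] [NormedSpace 𝕜 E']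
    [NormedAddCommGroup G] [NormedSpace 𝕜 G] [NormedSpace ℝ G]
    (L : E →L[𝕜] E' →L[𝕜] G) {a : ℝ} {w : ℝ → E} (hw : Function.support w ⊆ Ioc a (a + T))
    (F : AddCircle T → E') (x : ℝ) :
    (liftIoc T a w ⋆[L, volume] F) x = ∫ y, L (w y) (F ((x - y : ℝ) : AddCircle T)) := by
  rw [convolution_def, ← AddCircle.integral_preimage T a]
  calc ∫ y in Ioc a (a + T), L (liftIoc T a w y) (F (x - y))
    _ = ∫ y in Ioc a (a + T), L (w y) (F ((x - y : ℝ) : AddCircle T)) :=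
      setIntegral_congr_fun measurableSet_Ioc fun y hy ↦ by
        simp only [liftIoc_coe_apply hy, coe_sub]
    _ = ∫ y, L (w y) (F ((x - y : ℝ) : AddCircle T)) :=
      setIntegral_eq_integral_of_forall_compl_eq_zero fun y hy ↦ by
        rw [Function.notMem_support.1 (notMem_subset hw hy), map_zero, zero_apply]

theorem continuous_liftIoc_of_support_subset {B : Type*} [TopologicalSpace B] [Zero B] {a : ℝ}
    {w : ℝ → B} (hw : Continuous w) (hsupp : Function.support w ⊆ Ioo a (a + T)) :
    Continuous (liftIoc T a w) := by
  have hleft : w a = 0 := Function.notMem_support.1 fun ha ↦ left_notMem_Ioo (hsupp ha)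
  have hright : w (a + T) = 0 := Function.notMem_support.1 fun ha ↦ right_notMem_Ioo (hsupp ha)
  exact liftIoc_continuous (hleft.trans hright.symm) hw.continuousOn

theorem stronglyMeasurable_liftIco {B : Type*} [TopologicalSpace B] {g : ℝ → B}
    (hg : StronglyMeasurable g) (a : ℝ) : StronglyMeasurable (liftIco T a g) :=
  hg.comp_measurable (measurable_subtype_coe.comp (measurableEquivIco T a).measurable)

theorem memLp_liftIco_of_bound {B : Type*} [NormedAddCommGroup B] {a C : ℝ} {g : ℝ → B}
    (hg : StronglyMeasurable g) (hC : ∀ x ∈ Ico a (a + T), ‖g x‖ ≤ C) (p : ENNReal) :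
    MemLp (liftIco T a g) p := by
  refine .of_bound (stronglyMeasurable_liftIco hg a).aestronglyMeasurable C (.of_forall fun x ↦ ?_)
  obtain ⟨y, hy, rfl⟩ := (coe_image_Ico_eq T a).ge (mem_univ x)
  rw [liftIco_coe_apply hy]
  exact hC y hy

theorem eq_liftIco_zero_of_forall_add_mul_int {B : Type*} {f g : ℝ → B}
    (hf : ∀ x ∈ Ico 0 T, ∀ l : ℤ, f (x + T * l) = g x) (x : ℝ) : f x = liftIco T 0 g x := by
  have hx : toIcoMod hT.out 0 x + T * toIcoDiv hT.out 0 x = x := by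
    rw [mul_comm, ← zsmul_eq_mul, toIcoMod_add_toIcoDiv_zsmul]
  have hmem : toIcoMod hT.out 0 x ∈ Ico 0 T := by
    simpa only [zero_add] using toIcoMod_mem_Ico hT.out 0 x
  calc f x = g (toIcoMod hT.out 0 x) := by rw [← hf _ hmem, hx]
    _ = liftIco T 0 g x := rfl

theorem ofReal_integral_comp_sub_mul_eq_convolution {f g w : ℝ → ℝ} {a : ℝ}
    (hf : ∀ x ∈ Ico 0 T, ∀ l : ℤ, f (x + T * l) = g x)
    (hw : Function.support w ⊆ Ioc a (a + T)) (x : ℝ) :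
    ((∫ y, f (x - y) * w y : ℝ) : ℂ) =
      (liftIoc T a (fun y ↦ (w y : ℂ)) ⋆[lsmul ℂ ℂ, volume] liftIco T 0 fun y ↦ (g y : ℂ)) x := by
  have hw' : Function.support (fun y ↦ (w y : ℂ)) ⊆ Ioc a (a + T) :=
    fun y hy ↦ hw (Complex.ofReal_ne_zero.1 hy)
  have hf' (y : ℝ) : (f y : ℂ) = liftIco T 0 (fun y ↦ (g y : ℂ)) y :=
    congrArg Complex.ofReal (eq_liftIco_zero_of_forall_add_mul_int hf y)
  rw [convolution_liftIoc_coe _ hw', ← integral_complex_ofReal]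
  simp only [← hf', lsmul_apply, Complex.ofReal_mul, smul_eq_mul, mul_comm]

end Circle

section LineKernel

theorem integral_id_mul_eq_zero_of_even {w : ℝ → ℝ} (hw : Function.Even w) :
    ∫ y, y * w y = 0 := by
  have h := integral_neg_eq_self (fun y ↦ y * w y) volume
  simp only [hw _, neg_mul, integral_neg] at h
  linarith

theorem integral_comp_sub_mul_eq_self {f w : ℝ → ℝ} {x : ℝ}
    (hf : ∀ y ∈ Function.support w, f (x - y) = x - y) (hw : Integrable w)
    (hyw : Integrable fun y ↦ y * w y) (hmass : ∫ y, w y = 1) (hmoment : ∫ y, y * w y = 0) :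
    ∫ y, f (x - y) * w y = x := by
  have hlocal (y : ℝ) : f (x - y) * w y = x * w y - y * w y := by
    by_cases hy : w y = 0
    · simp only [hy, mul_zero, sub_zero]
    · rw [hf y hy, sub_mul]
  simp only [hlocal]
  rw [integral_sub (hw.const_mul x) hyw, integral_const_mul, hmass, hmoment, mul_one, sub_zero]

end LineKernel

section Bump

variable {γ : ℝ}

theorem bumpChi_eq_max_pow (hγ : 0 < γ) (x : ℝ) :
    bumpChi γ x = max 0 (1 - (x / γ) ^ 2) ^ 3 := by
  have habs : |x| ≤ γ ↔ 0 ≤ 1 - (x / γ) ^ 2 := by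
    rw [sub_nonneg, sq_le_one_iff_abs_le_one, abs_div, abs_of_pos hγ, div_le_one hγ]
  unfold bumpChi
  split_ifs with hx
  · rw [max_eq_right (habs.1 hx)]
  · rw [max_eq_left (not_le.1 (mt habs.2 hx)).le, zero_pow three_ne_zero]

theorem continuous_bumpChi (hγ : 0 < γ) : Continuous (bumpChi γ) := by
  rw [funext (bumpChi_eq_max_pow hγ)]
  fun_prop

theorem even_bumpChi (γ : ℝ) : Function.Even (bumpChi γ) := fun x ↦ by
  simp only [bumpChi, abs_neg, neg_div, neg_sq]

theorem support_bumpChi_subset (γ : ℝ) : Function.support (bumpChi γ) ⊆ Icc (-γ) γ := fun _ hx ↦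
  abs_le.1 <| by_contra fun h ↦ hx (if_neg h)

theorem bumpChi_pos {x : ℝ} (hx : x ∈ Ioo (-γ) γ) : 0 < bumpChi γ x := by
  have habs : |x| < γ := abs_lt.2 hx
  have hγ : 0 < γ := (abs_nonneg x).trans_lt habs
  have hsq : (x / γ) ^ 2 < 1 := by
    rwa [sq_lt_one_iff_abs_lt_one, abs_div, abs_of_pos hγ, div_lt_one hγ]
  rw [bumpChi, if_pos habs.le]
  exact pow_pos (sub_pos.2 hsq) 3

theorem intervalIntegral_bumpChi_pos (hγ : 0 < γ) : 0 < ∫ z in (-γ)..γ, bumpChi γ z :=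
  intervalIntegral.intervalIntegral_pos_of_pos_on
    ((continuous_bumpChi hγ).intervalIntegrable _ _) (fun _ ↦ bumpChi_pos) (by linarith)

/-- The bump `bumpChi γ` rescaled to total mass one. -/
noncomputable def normalizedBump (γ y : ℝ) : ℝ :=
  bumpChi γ y / ∫ z in (-γ)..γ, bumpChi γ z

theorem continuous_normalizedBump (hγ : 0 < γ) : Continuous (normalizedBump γ) :=
  (continuous_bumpChi hγ).div_const _

theorem even_normalizedBump (γ : ℝ) : Function.Even (normalizedBump γ) := fun y ↦ by
  rw [normalizedBump, even_bumpChi γ y, normalizedBump]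

theorem support_normalizedBump_subset (γ : ℝ) :
    Function.support (normalizedBump γ) ⊆ Icc (-γ) γ := fun _ hx ↦
  support_bumpChi_subset γ (div_ne_zero_iff.1 hx).1

theorem integral_normalizedBump (hγ : 0 < γ) : ∫ y, normalizedBump γ y = 1 := by
  have hline : ∫ z in (-γ)..γ, bumpChi γ z = ∫ z, bumpChi γ z := by
    rw [intervalIntegral.integral_of_le (by linarith), ← integral_Icc_eq_integral_Ioc]
    exact setIntegral_eq_integral_of_forall_compl_eq_zero fun z hz ↦
      Function.notMem_support.1 (notMem_subset (support_bumpChi_subset γ) hz)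
  simp only [normalizedBump]
  rw [integral_div, ← hline, div_self (intervalIntegral_bumpChi_pos hγ).ne']

end Bump

section TwoPi

local instance fact_zero_lt_two_pi : Fact (0 < 2 * Real.pi) := ⟨Real.two_pi_pos⟩

theorem fourier_two_pi_coe (n : ℤ) (θ : ℝ) :
    fourier n (θ : AddCircle (2 * Real.pi)) = Complex.exp (n * θ * Complex.I) := by
  rw [fourier_coe_apply]
  congr 1
  push_cast
  field_simp

theorem fourierCoeff_two_pi (F : AddCircle (2 * Real.pi) → ℂ) (n : ℤ) :
    fourierCoeff F n = (1 / (2 * Real.pi) : ℂ) *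
      ∫ θ in (0 : ℝ)..(2 * Real.pi), F θ * Complex.exp (-n * θ * Complex.I) := by
  rw [fourierCoeff_eq_intervalIntegral F n 0, zero_add, Complex.real_smul]
  simp only [fourier_two_pi_coe, smul_eq_mul, mul_comm (Complex.exp _)]
  push_cast
  rfl

theorem sawtooth_smoothed_fourier_series_general (f : ℝ → ℝ)
    (hf : ∀ θ : ℝ, θ ∈ Ico 0 (2 * Real.pi) → ∀ l : ℤ, f (θ + 2 * Real.pi * l) = θ)
    (γ : ℝ) (hγ : γ < Real.pi) (w : ℝ → ℝ) (hw_cont : Continuous w)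
    (hw_supp : Function.support w ⊆ Icc (-γ) γ) (hw_mass : ∫ y, w y = 1)
    (hw_moment : ∫ y, y * w y = 0) (c : ℤ → ℂ)
    (hc : ∀ k : ℤ, c k = (1 / (2 * Real.pi) : ℂ) *
      ∫ θ in (0 : ℝ)..(2 * Real.pi), ((∫ y : ℝ, f (θ - y) * w y : ℝ) : ℂ) *
        Complex.exp (-(k : ℂ) * (θ : ℂ) * Complex.I)) :
    (∀ θ : ℝ, Summable (fun k : ℤ => ‖c k * Complex.exp ((k : ℂ) * (θ : ℂ) * Complex.I)‖)) ∧
    ∀ θ : ℝ, θ ∈ Ioo γ (2 * Real.pi - γ) →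
      ∑' k : ℤ, c k * Complex.exp ((k : ℂ) * (θ : ℂ) * Complex.I) = (θ : ℂ) := by
  let W := liftIoc (2 * Real.pi) (-Real.pi) fun y ↦ (w y : ℂ)
  let F := liftIco (2 * Real.pi) 0 fun x ↦ (x : ℂ)
  have hsupp : Function.support w ⊆ Ioo (-Real.pi) (-Real.pi + 2 * Real.pi) :=
    hw_supp.trans (Icc_subset_Ioo (by linarith) (by linarith))
  have hW : Continuous W := continuous_liftIoc_of_support_subset (by fun_prop)
    fun y hy ↦ hsupp (Complex.ofReal_ne_zero.1 hy)
  have hF : MemLp F 2 := memLp_liftIco_of_bound Complex.continuous_ofReal.stronglyMeasurable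
    (C := 2 * Real.pi) (fun x hx ↦ by
      rw [Complex.norm_real, Real.norm_of_nonneg hx.1]
      linarith [hx.2]) 2
  have hconv (θ : ℝ) : ((∫ y, f (θ - y) * w y : ℝ) : ℂ) = (W ⋆[lsmul ℂ ℂ, volume] F) θ :=
    ofReal_integral_comp_sub_mul_eq_convolution hf (hsupp.trans Ioo_subset_Ioc_self) θ
  have hcoeff (k : ℤ) : c k = fourierCoeff (W ⋆[lsmul ℂ ℂ, volume] F) k := by
    simp only [hc, hconv, fourierCoeff_two_pi]
  have hseries (θ : ℝ) : HasSum (fun k : ℤ ↦ c k * Complex.exp (k * θ * Complex.I))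
      ((∫ y, f (θ - y) * w y : ℝ) : ℂ) := by
    simpa only [hcoeff, hconv, fourier_two_pi_coe, smul_eq_mul]
      using hasSum_fourier_convolution hW hF θ
  have hw_compact : HasCompactSupport w := .of_support_subset_isCompact isCompact_Icc hw_supp
  have hlinear {θ : ℝ} (hθ : θ ∈ Ioo γ (2 * Real.pi - γ)) (y : ℝ) (hy : y ∈ Function.support w) :
      f (θ - y) = θ - y := by
    obtain ⟨hy₁, hy₂⟩ := hw_supp hy
    simpa using hf (θ - y) ⟨by linarith [hθ.1], by linarith [hθ.2]⟩ 0
  refine ⟨fun θ ↦ (hseries θ).summable.norm, fun θ hθ ↦ ?_⟩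
  rw [(hseries θ).tsum_eq, integral_comp_sub_mul_eq_self (hlinear hθ)
    (hw_cont.integrable_of_hasCompactSupport hw_compact)
    ((continuous_id.mul hw_cont).integrable_of_hasCompactSupport hw_compact.mul_left)
    hw_mass hw_moment]

end TwoPi

/-- The Fourier series of the convolution of the sawtooth with the normalized bump converges
absolutely everywhere, and sums to `θ` on `(γ, 2π - γ)`. -/
theorem sawtooth_smoothed_fourier_series (f : ℝ → ℝ)
    (hf : ∀ θ : ℝ, θ ∈ Set.Ico 0 (2 * Real.pi) → ∀ l : ℤ, f (θ + 2 * Real.pi * l) = θ)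
    (γ : ℝ) (hγ : γ ∈ Set.Ioo 0 Real.pi)
    (c : ℤ → ℂ)
    (hc : ∀ k : ℤ, c k = (1 / (2 * Real.pi) : ℂ) *
      ∫ θ in (0 : ℝ)..(2 * Real.pi),
        ((∫ y : ℝ, f (θ - y) * (bumpChi γ y / ∫ z in (-γ)..γ, bumpChi γ z) : ℝ) : ℂ) *
          Complex.exp (-(k : ℂ) * (θ : ℂ) * Complex.I)) :
    (∀ θ : ℝ, Summable (fun k : ℤ => ‖c k * Complex.exp ((k : ℂ) * (θ : ℂ) * Complex.I)‖)) ∧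
    ∀ θ : ℝ, θ ∈ Set.Ioo γ (2 * Real.pi - γ) →
      ∑' k : ℤ, c k * Complex.exp ((k : ℂ) * (θ : ℂ) * Complex.I) = (θ : ℂ) :=
  sawtooth_smoothed_fourier_series_general f hf γ hγ.2 (normalizedBump γ)
    (continuous_normalizedBump hγ.1) (support_normalizedBump_subset γ)
    (integral_normalizedBump hγ.1) (integral_id_mul_eq_zero_of_even (even_normalizedBump γ)) c hc
end
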